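/- arXiv:2312.10360 — 2 statements merged into one kernel-verified Lean document; each statement's English description precedes it below -/
import Mathlib

section
/- Let ρ_1,…,ρ_n be i.i.d. nonnegative random variables and 1 ≤ s < n. Then Pr(S_s^{(c)} > S_s) ≤ s/n; consequently, if s is fixed (or s = o(n)) then S_s^{(c)} − S_s → 0 in probability as n → ∞. -/
/-!
If the law of `ρ` is invariant under cyclic shifts (as it is for i.i.d. coordinates), then the event
`S_s < S_s^{(c)}` has the same probability for all `n` cyclic shifts of `ρ`. For a fixed `ρ`, choose
a window of maximal circular sum. A shift of `ρ` can lie in the event only if it moves the start of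
this window to one of the last `s - 1` positions, the only ones from which a window wraps around. So
at most `s - 1` of the `n` shifts lie in the event, and integrating this count gives
`n * Pr(S_s < S_s^{(c)}) ≤ s - 1`.
-/

open MeasureTheory Finset Filter Asymptotics
open scoped ENNReal

/-- The circular `s`-scan statistic of `ρ_0, …, ρ_{n-1}`: the maximum over all `i` of
`ρ_i + ρ_{i+1} + ⋯ + ρ_{i+s-1}`, indices taken mod `n`. -/
def circScan {n : ℕ} (s : ℕ) (hn : 0 < n) (ρ : Fin n → ℝ) : ℝ :=
  univ.sup' (univ_nonempty_iff.mpr ⟨⟨0, hn⟩⟩)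
    (fun i : Fin n => ∑ j ∈ range s, ρ ⟨((i : ℕ) + j) % n, Nat.mod_lt _ hn⟩)

/-- The linear `s`-scan statistic of `ρ_0, …, ρ_{n-1}`: the maximum over
`0 ≤ i ≤ n - s` of `ρ_i + ⋯ + ρ_{i+s-1}` (no wrap-around; for `s ≤ n` the index
`(i + j) % n` below equals `i + j`). -/
def linScan {n : ℕ} (s : ℕ) (hn : 0 < n) (ρ : Fin n → ℝ) : ℝ :=
  (range (n - s + 1)).sup' (nonempty_range_iff.mpr (Nat.succ_ne_zero _))
    (fun i => ∑ j ∈ range s, ρ ⟨(i + j) % n, Nat.mod_lt _ hn⟩)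

section DoubleCounting

variable {Ω Ω' ι : Type*} [MeasurableSpace Ω] [MeasurableSpace Ω'] [Fintype ι] {μ : Measure Ω}

open Classical in
lemma sum_measure_le_of_card_mem_le {A : ι → Set Ω} (hA : ∀ i, NullMeasurableSet (A i) μ) {c : ℕ}
    (hc : ∀ ω, #{i | ω ∈ A i} ≤ c) : ∑ i, μ (A i) ≤ c * μ Set.univ :=
  calc ∑ i, μ (A i)
      = ∑ i, ∫⁻ ω, (A i).indicator 1 ω ∂μ :=
        Finset.sum_congr rfl fun i _ => (lintegral_indicator_one₀ (hA i)).symm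
    _ = ∫⁻ ω, ∑ i, (A i).indicator 1 ω ∂μ :=
        (lintegral_finsetSum' _ fun i _ => aemeasurable_const.indicator₀ (hA i)).symm
    _ ≤ ∫⁻ _, c ∂μ := by
        refine lintegral_mono fun ω => ?_
        simp only [Set.indicator_apply, Pi.one_apply, Finset.sum_boole]
        exact_mod_cast hc ω
    _ = c * μ Set.univ := lintegral_const _

open Classical in
lemma card_mul_measure_le_of_card_mem_le {ν : Measure Ω'} {T : ι → Ω → Ω'}
    (hT : ∀ i, MeasurePreserving (T i) μ ν) {A : Set Ω'} (hA : NullMeasurableSet A ν) {c : ℕ}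
    (hc : ∀ ω, #{i | T i ω ∈ A} ≤ c) : Fintype.card ι * ν A ≤ c * μ Set.univ :=
  calc Fintype.card ι * ν A
      = ∑ i, μ (T i ⁻¹' A) := by simp [(hT _).measure_preimage hA]
    _ ≤ c * μ Set.univ :=
        sum_measure_le_of_card_mem_le (fun i => hA.preimage (hT i).quasiMeasurePreserving) hc

end DoubleCounting

lemma measurable_fun_sup' {Ω ι β : Type*} [MeasurableSpace Ω] [MeasurableSpace β]
    [SemilatticeSup β] [MeasurableSup₂ β] {s : Finset ι} (hs : s.Nonempty) {f : ι → Ω → β}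
    (hf : ∀ i ∈ s, Measurable (f i)) : Measurable fun ω => s.sup' hs fun i => f i ω := by
  simpa only [← Finset.sup'_apply] using! Finset.measurable_sup' hs hf

section CyclicShift

variable {n : ℕ} {α : Type*}

/-- The configuration `ρ` on the cycle `Fin n`, read from position `k` onwards. -/
def cyclicShift (k : Fin n) (ρ : Fin n → α) : Fin n → α :=
  fun i => ρ (i + k)

/-- A law on configurations on the cycle `Fin n` is cyclically stationary if it is invariant under
all cyclic shifts. The averaging argument over shifts is carried out for such laws. -/
def IsCyclicallyStationary [MeasurableSpace α] (P : Measure (Fin n → α)) : Prop :=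
  ∀ k, MeasurePreserving (cyclicShift k) P P

lemma isCyclicallyStationary_pi [MeasurableSpace α] (μ : Measure α) [SigmaFinite μ] :
    IsCyclicallyStationary (Measure.pi fun _ : Fin n => μ) := fun k =>
  have : NeZero n := .of_pos k.pos
  measurePreserving_arrowCongr' (fun _ => μ) (fun _ => μ) (Equiv.addRight k).symm
    (MeasurableEquiv.refl α) fun _ => MeasurePreserving.id μ

end CyclicShift

section WindowSum

variable {n : ℕ} {M : Type*} [AddCommMonoid M]

/-- The sum of `ρ` over the circular window of length `s` starting at `i`. The start is a natural
number read modulo `n`, so that both scan statistics are maxima of window sums. -/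
def windowSum (s : ℕ) (hn : 0 < n) (ρ : Fin n → M) (i : ℕ) : M :=
  ∑ j ∈ range s, ρ ⟨(i + j) % n, Nat.mod_lt _ hn⟩

lemma windowSum_cyclicShift (s : ℕ) (hn : 0 < n) (ρ : Fin n → M) (k i : Fin n) :
    windowSum s hn (cyclicShift k ρ) i = windowSum s hn ρ ↑(i + k) := by
  refine Finset.sum_congr rfl fun j _ => congrArg ρ (Fin.ext ?_)
  simp only [Fin.val_add, Nat.mod_add_mod, add_right_comm]

lemma measurable_windowSum [MeasurableSpace M] [MeasurableAdd₂ M] (s : ℕ) (hn : 0 < n) (i : ℕ) :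
    Measurable fun ρ : Fin n → M => windowSum s hn ρ i :=
  Finset.measurable_fun_sum _ fun _ _ => measurable_pi_apply _

end WindowSum

section Scan

lemma card_sub_lt_le (n s : ℕ) : #{i : Fin n | n - s < i} ≤ s - 1 := by
  have h : #{i : Fin n | n - s < i} ≤ #(Finset.Ioo (n - s) n) :=
    Finset.card_le_card_of_injOn Fin.val (fun i hi => by simpa using hi) Fin.val_injective.injOn
  rw [Nat.card_Ioo] at h
  omega

variable {n : ℕ} (s : ℕ) (hn : 0 < n)

lemma measurable_circScan : Measurable (circScan (n := n) s hn) :=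
  measurable_fun_sup' _ fun i _ => measurable_windowSum s hn i

lemma measurable_linScan : Measurable (linScan (n := n) s hn) :=
  measurable_fun_sup' _ fun i _ => measurable_windowSum s hn i

variable {s hn} in
lemma sub_lt_of_linScan_lt_circScan {ρ : Fin n → ℝ}
    (h : linScan s hn ρ < circScan s hn ρ) {m : Fin n}
    (hm : ∀ i : Fin n, windowSum s hn ρ i ≤ windowSum s hn ρ m) : n - s < m := by
  by_contra! hle
  have hlin : windowSum s hn ρ m ≤ linScan s hn ρ :=
    Finset.le_sup' (windowSum s hn ρ) (Finset.mem_range.mpr (Nat.lt_succ_of_le hle))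
  have hcirc : circScan s hn ρ ≤ windowSum s hn ρ m := Finset.sup'_le _ _ fun i _ => hm i
  exact (hcirc.trans hlin).not_gt h

lemma card_linScan_lt_circScan_cyclicShift_le (ρ : Fin n → ℝ) :
    #{k | linScan s hn (cyclicShift k ρ) < circScan s hn (cyclicShift k ρ)} ≤ s - 1 := by
  have : NeZero n := .of_pos hn
  obtain ⟨m, hm⟩ := Finite.exists_max fun i : Fin n => windowSum s hn ρ i
  have hmax (k i : Fin n) : windowSum s hn (cyclicShift k ρ) i ≤
      windowSum s hn (cyclicShift k ρ) ↑(m - k) := by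
    simpa only [windowSum_cyclicShift, sub_add_cancel] using hm (i + k)
  refine (Finset.card_le_card_of_injOn (m - ·) (fun k hk => ?_) sub_right_injective.injOn).trans
    (card_sub_lt_le n s)
  simpa using sub_lt_of_linScan_lt_circScan (by simpa using hk) (hmax k)

variable {P : Measure (Fin n → ℝ)} [IsProbabilityMeasure P]

lemma measure_linScan_lt_circScan_le (hP : IsCyclicallyStationary P) :
    P {ρ | linScan s hn ρ < circScan s hn ρ} ≤ (s - 1 : ℕ) / n := by
  have hA : MeasurableSet {ρ | linScan s hn ρ < circScan s hn ρ} :=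
    measurableSet_lt (measurable_linScan s hn) (measurable_circScan s hn)
  have hmul : n * P {ρ | linScan s hn ρ < circScan s hn ρ} ≤ (s - 1 : ℕ) := by
    simpa using card_mul_measure_le_of_card_mem_le hP hA.nullMeasurableSet (c := s - 1) fun ρ => by
      simpa using card_linScan_lt_circScan_cyclicShift_le s hn ρ
  rwa [ENNReal.le_div_iff_mul_le (.inl (by simpa using hn.ne')) (.inl (ENNReal.natCast_ne_top n)),
    mul_comm]

lemma measure_lt_circScan_sub_linScan_le (hP : IsCyclicallyStationary P) {ε : ℝ} (hε : 0 ≤ ε) :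
    P {ρ | ε < circScan s hn ρ - linScan s hn ρ} ≤ (s - 1 : ℕ) / n :=
  (measure_mono fun _ hρ => sub_pos.mp (hε.trans_lt hρ)).trans
    (measure_linScan_lt_circScan_le s hn hP)

end Scan

lemma tendsto_natCast_div_natCast_of_isLittleO {α : Type*} {l : Filter α} {f g : α → ℕ}
    (h : (fun a => (f a : ℝ)) =o[l] fun a => (g a : ℝ)) :
    Tendsto (fun a => (f a : ℝ≥0∞) / g a) l (nhds 0) := by
  refine ENNReal.tendsto_nhds_zero.mpr fun ε hε => ?_
  obtain ⟨c, hc, hcε⟩ := ENNReal.lt_iff_exists_nnreal_btwn.mp hε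
  filter_upwards [h.bound (c := c) (by exact_mod_cast hc)] with a ha
  have hle : (f a : ℝ≥0∞) ≤ c * g a := by
    simp only [RCLike.norm_natCast] at ha
    exact_mod_cast ha
  exact (ENNReal.div_le_of_le_mul hle).trans hcε.le

theorem stmt13_general (P : ∀ n, Measure (Fin n → ℝ)) [∀ n, IsProbabilityMeasure (P n)]
    (hP : ∀ n, IsCyclicallyStationary (P n)) :
    (∀ (n s : ℕ) (hn : 0 < n),
      P n {ρ | linScan s hn ρ < circScan s hn ρ} ≤ ((s - 1 : ℕ) : ℝ≥0∞) / (n : ℝ≥0∞)) ∧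
    (∀ s : ℕ → ℕ, (fun n : ℕ => (s n : ℝ)) =o[atTop] (fun n : ℕ => (n : ℝ)) →
      ∀ ε : ℝ, 0 < ε →
        Tendsto
          (fun n : ℕ =>
            if hn : 0 < n then P n {ρ | ε < circScan (s n) hn ρ - linScan (s n) hn ρ} else 0)
          atTop (nhds 0)) := by
  refine ⟨fun n s hn => measure_linScan_lt_circScan_le s hn (hP n), fun s hs ε hε => ?_⟩
  refine tendsto_of_tendsto_of_tendsto_of_le_of_le tendsto_const_nhds
    (tendsto_natCast_div_natCast_of_isLittleO hs) (fun _ => zero_le) fun n => ?_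
  dsimp only
  split_ifs with hn
  · calc P n {ρ | ε < circScan (s n) hn ρ - linScan (s n) hn ρ}
        ≤ (s n - 1 : ℕ) / n := measure_lt_circScan_sub_linScan_le (s n) hn (hP n) hε.le
      _ ≤ s n / n := by gcongr; exact Nat.sub_le _ _
  · exact zero_le

/-- For i.i.d. nonnegative demands: (i) for `1 ≤ s < n`, `Pr(S_s^{(c)} > S_s) ≤ s/n`;
(ii) consequently, along any sequence of window sizes `s n` with `1 ≤ s n < n`
eventually and `s n = o(n)` (which covers a fixed `s`), the difference
`S_{s n}^{(c)} - S_{s n} → 0` in probability as `n → ∞`. -/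
theorem stmt13 (μ : Measure ℝ) [IsProbabilityMeasure μ] (hμ : μ (Set.Iio 0) = 0) :
    (∀ (n s : ℕ) (hn : 0 < n), 1 ≤ s → s < n →
      (Measure.pi fun _ : Fin n => μ) {ρ | linScan s hn ρ < circScan s hn ρ} ≤
        (s : ℝ≥0∞) / (n : ℝ≥0∞)) ∧
    (∀ s : ℕ → ℕ, (∀ n, 1 ≤ s n) → (∀ᶠ n : ℕ in atTop, s n < n) →
      (fun n : ℕ => (s n : ℝ)) =o[atTop] (fun n : ℕ => (n : ℝ)) →
      ∀ ε : ℝ, 0 < ε →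
        Tendsto
          (fun n : ℕ =>
            if hn : 0 < n then
              (Measure.pi fun _ : Fin n => μ)
                {ρ | ε < circScan (s n) hn ρ - linScan (s n) hn ρ}
            else 0)
          atTop (nhds 0)) := by
  have ⟨hbound, htendsto⟩ := stmt13_general _ fun n => isCyclicallyStationary_pi (n := n) μ
  exact ⟨fun n s hn _ _ => (hbound n s hn).trans (by gcongr; exact Nat.sub_le s 1),
    fun s _ _ => htendsto s⟩
end

section
/- In a d-choice allocation of n objects on n nodes with cyclic design and i.i.d. demands, the robustness satisfies Pr(S_d^{(c)} ≤ m·d) ≤ P ≤ min_{1 ≤ s ≤ n−d+1} Pr(S_s^{(c)} ≤ m·(s + d − 1)), where S_s^{(c)} is the circular s-scan statistic of the demands. -/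
open MeasureTheory Finset
open scoped ENNReal

/-- A demand vector `ρ` is `m`-servable for the storage allocation `C` (object `i` is
stored on the set of nodes `C i`) if the demands can be split across service choices
so that every node carries load at most `m`. -/
def Servable {n k : ℕ} (C : Fin k → Finset (Fin n)) (m : ℝ) (ρ : Fin k → ℝ) : Prop :=
  ∃ x : Fin k → Fin n → ℝ,
    (∀ i u, 0 ≤ x i u) ∧
    (∀ i u, u ∉ C i → x i u = 0) ∧
    (∀ i, ∑ u ∈ C i, x i u = ρ i) ∧
    (∀ u : Fin n, ∑ i ∈ univ.filter (fun i => u ∈ C i), x i u ≤ m)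

/-- Cyclic design: object `i` is stored on nodes `i, i+1, …, i+d-1 (mod n)`. -/
def CyclicDesign {n : ℕ} (d : ℕ) (C : Fin n → Finset (Fin n)) : Prop :=
  ∀ i : Fin n,
    C i = (range d).image fun j => (⟨((i : ℕ) + j) % n, Nat.mod_lt _ i.pos⟩ : Fin n)

/-!
*Lower bound.* Split every nonnegative demand evenly over its `d` nodes. The objects stored on node
`u` lie in the window of length `d` ending at `u`, whose total demand is at most `m * d`, so the
load of `u` is at most `m`.

*Upper bound.* Any set of objects can be served only by the nodes storing one of them, so its total
demand is at most `m` times the number of these nodes. The `s ≤ n` distinct objects of a window are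
stored on the at most `s + d - 1` nodes of the longer window with the same start.
-/

section Servable

variable {n k : ℕ} {C : Fin k → Finset (Fin n)} {m : ℝ} {ρ : Fin k → ℝ}

theorem Servable.threshold_nonneg (h : Servable C m ρ) (u : Fin n) : 0 ≤ m := by
  obtain ⟨x, hx0, -, -, hload⟩ := h
  exact (sum_nonneg fun i _ => hx0 i u).trans (hload u)

theorem Servable.sum_le_mul_card_biUnion (h : Servable C m ρ) (T : Finset (Fin k)) :
    ∑ i ∈ T, ρ i ≤ m * #(T.biUnion C) := by
  obtain ⟨x, hx0, hsupp, hdemand, hload⟩ := h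
  have load_le (u : Fin n) : ∑ i ∈ T, x i u ≤ m :=
    calc ∑ i ∈ T, x i u ≤ ∑ i, x i u :=
          sum_le_univ_sum_of_nonneg fun i => hx0 i u
      _ = ∑ i with u ∈ C i, x i u :=
          (sum_filter_of_ne fun i _ => not_imp_comm.mp (hsupp i u)).symm
      _ ≤ m := hload u
  calc ∑ i ∈ T, ρ i = ∑ i ∈ T, ∑ u ∈ T.biUnion C, x i u := by
        refine sum_congr rfl fun i hi => ?_
        rw [← hdemand i]
        exact sum_subset (subset_biUnion_of_mem C hi) fun u _ => hsupp i u
    _ = ∑ u ∈ T.biUnion C, ∑ i ∈ T, x i u := sum_comm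
    _ ≤ ∑ _u ∈ T.biUnion C, m := sum_le_sum fun u _ => load_le u
    _ = m * #(T.biUnion C) := by rw [sum_const, nsmul_eq_mul, mul_comm]

theorem servable_of_sum_div_card_le (hC : ∀ i, (C i).Nonempty) (hρ : ∀ i, 0 ≤ ρ i)
    (hload : ∀ u, ∑ i with u ∈ C i, ρ i / #(C i) ≤ m) : Servable C m ρ := by
  refine ⟨fun i u => if u ∈ C i then ρ i / #(C i) else 0, fun i u => ?_,
    fun i u hu => if_neg hu, fun i => ?_, fun u => ?_⟩
  · have := hρ i
    positivity
  · have hcard : (#(C i) : ℝ) ≠ 0 := Nat.cast_ne_zero.mpr (hC i).card_ne_zero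
    rw [sum_ite_mem, inter_self, sum_const, nsmul_eq_mul, mul_div_cancel₀ _ hcard]
  · rw [sum_congr rfl fun i hi => if_pos (mem_filter.mp hi).2]
    exact hload u

end Servable

section CyclicWindow

variable {n : ℕ}

/-- The cyclic window `i, i+1, …, i+s-1 (mod n)`: the nodes storing object `i` in the cyclic
design with `s` choices, and the index set of the sums in `circScan s`. It is a set, so for
`s > n` it is all of `Fin n`, without multiplicity. -/
def cyclicWindow (i : Fin n) (s : ℕ) : Finset (Fin n) :=
  (range s).image fun j => (⟨((i : ℕ) + j) % n, Nat.mod_lt _ i.pos⟩ : Fin n)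

theorem mem_cyclicWindow {i k : Fin n} {s : ℕ} :
    k ∈ cyclicWindow i s ↔ ∃ j < s, ((i : ℕ) + j) % n = k := by
  simp only [cyclicWindow, mem_image, mem_range, Fin.ext_iff]

theorem injOn_add_mod (i : Fin n) {s : ℕ} (hs : s ≤ n) :
    Set.InjOn (fun j => (⟨((i : ℕ) + j) % n, Nat.mod_lt _ i.pos⟩ : Fin n)) (range s) := by
  intro a ha b hb hab
  have hmod : i + a ≡ i + b [MOD n] := Fin.ext_iff.mp hab
  exact (Nat.ModEq.add_left_cancel' _ hmod).eq_of_lt_of_lt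
    ((mem_range.mp ha).trans_le hs) ((mem_range.mp hb).trans_le hs)

theorem sum_cyclicWindow {M : Type*} [AddCommMonoid M] (i : Fin n) {s : ℕ} (hs : s ≤ n)
    (f : Fin n → M) :
    ∑ k ∈ cyclicWindow i s, f k = ∑ j ∈ range s, f ⟨((i : ℕ) + j) % n, Nat.mod_lt _ i.pos⟩ :=
  sum_image (injOn_add_mod i hs)

theorem card_cyclicWindow (i : Fin n) {s : ℕ} (hs : s ≤ n) : #(cyclicWindow i s) = s := by
  rw [cyclicWindow, card_image_of_injOn (injOn_add_mod i hs), card_range]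

theorem card_cyclicWindow_le (i : Fin n) (s : ℕ) : #(cyclicWindow i s) ≤ s :=
  card_image_le.trans_eq (card_range s)

theorem biUnion_cyclicWindow_subset (i : Fin n) (s d : ℕ) :
    (cyclicWindow i s).biUnion (cyclicWindow · d) ⊆ cyclicWindow i (s + d - 1) := by
  intro u hu
  obtain ⟨k, hk, hu⟩ := mem_biUnion.mp hu
  obtain ⟨j, hj, hjk⟩ := mem_cyclicWindow.mp hk
  obtain ⟨l, hl, hlu⟩ := mem_cyclicWindow.mp hu
  refine mem_cyclicWindow.mpr ⟨j + l, by omega, ?_⟩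
  rw [← hlu, ← hjk, Nat.mod_add_mod, add_assoc]

theorem exists_forall_mem_cyclicWindow (u : Fin n) (d : ℕ) :
    ∃ v, ∀ i, u ∈ cyclicWindow i d → i ∈ cyclicWindow v d := by
  -- `v = u - (d - 1)` modulo `n`, the start of the window ending at `u`.
  refine ⟨⟨(u + (n - 1) * (d - 1)) % n, Nat.mod_lt _ u.pos⟩, fun i hi => ?_⟩
  obtain ⟨j, hj, hju⟩ := mem_cyclicWindow.mp hi
  refine mem_cyclicWindow.mpr ⟨d - 1 - j, by omega, ?_⟩
  have shift : i + j + (n - 1) * (d - 1) + (d - 1 - j) = i + n * (d - 1) := by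
    have hn : (n - 1) * (d - 1) + (d - 1) = n * (d - 1) := by
      rw [← Nat.succ_mul, Nat.succ_eq_add_one, Nat.sub_add_cancel u.pos]
    omega
  rw [← hju, Nat.mod_add_mod, add_assoc, Nat.mod_add_mod, ← add_assoc, shift,
    Nat.add_mul_mod_self_left, Nat.mod_eq_of_lt i.isLt]

theorem circScan_le_iff {s : ℕ} (hn : 0 < n) (hs : s ≤ n) {ρ : Fin n → ℝ} {c : ℝ} :
    circScan s hn ρ ≤ c ↔ ∀ i, ∑ k ∈ cyclicWindow i s, ρ k ≤ c := by
  simp only [circScan, sup'_le_iff, mem_univ, true_imp_iff, sum_cyclicWindow _ hs]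

end CyclicWindow

namespace CyclicDesign

variable {n d : ℕ} {C : Fin n → Finset (Fin n)} {m : ℝ} {ρ : Fin n → ℝ}

theorem servable_of_circScan_le (hC : CyclicDesign d C) (hn : 0 < n) (hd : 1 ≤ d) (hdn : d ≤ n)
    (hρ : ∀ i, 0 ≤ ρ i) (h : circScan d hn ρ ≤ m * d) : Servable C m ρ := by
  obtain rfl : C = (cyclicWindow · d) := funext hC
  have hd0 : (0 : ℝ) < d := by exact_mod_cast hd
  refine servable_of_sum_div_card_le
    (fun i => card_pos.mp (hd.trans_eq (card_cyclicWindow i hdn).symm)) hρ fun u => ?_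
  obtain ⟨v, hv⟩ := exists_forall_mem_cyclicWindow u d
  have hsub : ({i | u ∈ cyclicWindow i d} : Finset (Fin n)) ⊆ cyclicWindow v d :=
    fun i hi => hv i (mem_filter.mp hi).2
  calc ∑ i with u ∈ cyclicWindow i d, ρ i / #(cyclicWindow i d)
      = (∑ i with u ∈ cyclicWindow i d, ρ i) / d := by
        simp only [card_cyclicWindow _ hdn, sum_div]
    _ ≤ (∑ i ∈ cyclicWindow v d, ρ i) / d := by
        gcongr
        exact fun i _ _ => hρ i
    _ ≤ m := (div_le_iff₀ hd0).mpr ((circScan_le_iff hn hdn).mp h v)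

theorem circScan_le_of_servable (hC : CyclicDesign d C) (hn : 0 < n) {s : ℕ} (hs : s ≤ n)
    (h : Servable C m ρ) : circScan s hn ρ ≤ m * (s + d - 1 : ℕ) := by
  obtain rfl : C = (cyclicWindow · d) := funext hC
  refine (circScan_le_iff hn hs).mpr fun i => (h.sum_le_mul_card_biUnion _).trans ?_
  have hcard : #((cyclicWindow i s).biUnion (cyclicWindow · d)) ≤ s + d - 1 :=
    (card_le_card (biUnion_cyclicWindow_subset i s d)).trans (card_cyclicWindow_le i _)
  exact mul_le_mul_of_nonneg_left (Nat.cast_le.mpr hcard) (h.threshold_nonneg i)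

end CyclicDesign

theorem stmt16_general {n d : ℕ} (hn : 0 < n) (hd : 1 ≤ d) (hdn : d ≤ n)
    {C : Fin n → Finset (Fin n)} (hC : CyclicDesign d C) (m : ℝ)
    {ν : Measure (Fin n → ℝ)} (hν : ∀ᵐ ρ ∂ν, 0 ≤ ρ) :
    ν {ρ | circScan d hn ρ ≤ m * d} ≤ ν {ρ | Servable C m ρ} ∧
      ∀ s ≤ n, ν {ρ | Servable C m ρ} ≤
        ν {ρ | circScan s hn ρ ≤ m * ((s : ℝ) + (d : ℝ) - 1)} := by
  refine ⟨measure_mono_ae ?_, fun s hs => measure_mono fun ρ hρ => ?_⟩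
  · filter_upwards [hν] with ρ hρ h using hC.servable_of_circScan_le hn hd hdn hρ h
  · have hscan : circScan s hn ρ ≤ m * (s + d - 1 : ℕ) := hC.circScan_le_of_servable hn hs hρ
    rwa [Nat.cast_sub (by omega), Nat.cast_add, Nat.cast_one] at hscan

/-- In a `d`-choice allocation with cyclic design, with i.i.d. demands, the robustness `P`
satisfies `Pr(S_d^{(c)} ≤ m·d) ≤ P` and, for every `1 ≤ s ≤ n - d + 1`,
`P ≤ Pr(S_s^{(c)} ≤ m·(s + d - 1))`. -/
theorem stmt16 (n d : ℕ) (hn : 0 < n) (hd : 1 ≤ d) (hdn : d ≤ n)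
    (C : Fin n → Finset (Fin n)) (hC : CyclicDesign d C)
    (m : ℝ) (hm0 : 0 < m) (hm1 : m ≤ 1)
    (μ : Measure ℝ) [IsProbabilityMeasure μ] (hμ : μ (Set.Iio 0) = 0) :
    (Measure.pi fun _ : Fin n => μ) {ρ | circScan d hn ρ ≤ m * d} ≤
        (Measure.pi fun _ : Fin n => μ) {ρ | Servable C m ρ} ∧
      ∀ s : ℕ, 1 ≤ s → s ≤ n - d + 1 →
        (Measure.pi fun _ : Fin n => μ) {ρ | Servable C m ρ} ≤
          (Measure.pi fun _ : Fin n => μ)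
            {ρ | circScan s hn ρ ≤ m * ((s : ℝ) + (d : ℝ) - 1)} := by
  have hnonneg : ∀ᵐ t ∂μ, 0 ≤ t := ae_iff.mpr (by simpa only [not_le, Set.Iio_def] using hμ)
  obtain ⟨lower, upper⟩ := stmt16_general hn hd hdn hC m (Measure.ae_le_pi fun _ => hnonneg)
  exact ⟨lower, fun s _ hs => upper s (by omega)⟩
end
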